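/- Let X be a separable Banach space and let T : X → X be a hypercyclic bounded linear operator. Then for every α > 0, the set of vectors x ∈ HC(T) such that the upper density of N_T(x, B_α) equals c(T) is comeager in X. -/

import Mathlib

open MeasureTheory Filter Topology Set Metric

/-- The upper density of a set of natural numbers:
`limsup_{N→∞} #(A ∩ [1,N]) / N`. -/
noncomputable def upperDensity (A : Set ℕ) : ℝ :=
  Filter.limsup (fun N : ℕ => (Nat.card ↥(A ∩ Set.Icc 1 N) : ℝ) / N) Filter.atTop

/-- `x` is a hypercyclic point for `T`: its orbit is dense. -/
def HypPt {X : Type*} [TopologicalSpace X] (T : X → X) (x : X) : Prop :=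
  Dense (Set.range fun n : ℕ => T^[n] x)

/-- The parameter `c(T)`:
`c(T) = sup_{R>0} sup_{x ∈ HC(T)} upperDensity {n | T^[n] x ∈ B̄(0,R)}`. -/
noncomputable def cConst {X : Type*} [NormedAddCommGroup X] (T : X → X) : ℝ :=
  sSup {c : ℝ | ∃ R : ℝ, 0 < R ∧ ∃ x : X, HypPt T x ∧
    c = upperDensity {n : ℕ | T^[n] x ∈ Metric.closedBall 0 R}}

lemma cnt_le (A : Set ℕ) (N : ℕ) : (Nat.card ↥(A ∩ Set.Icc 1 N) : ℝ) ≤ N := by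
  have h : (A ∩ Set.Icc 1 N).ncard ≤ (Set.Icc 1 N).ncard :=
    Set.ncard_le_ncard Set.inter_subset_right (Set.finite_Icc 1 N)
  have h2 : (Set.Icc 1 N).ncard = N := by
    rw [← Finset.coe_Icc, Set.ncard_coe_finset]; simp
  rw [h2] at h
  rw [Nat.card_coe_set_eq]
  exact_mod_cast h

lemma ratio_le (A : Set ℕ) (N : ℕ) : (Nat.card ↥(A ∩ Set.Icc 1 N) : ℝ) / N ≤ 1 :=
  div_le_one_of_le₀ (cnt_le A N) (Nat.cast_nonneg N)

lemma ratio_bdd (A : Set ℕ) : IsBoundedUnder (· ≤ ·) atTop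
    (fun N : ℕ => (Nat.card ↥(A ∩ Set.Icc 1 N) : ℝ) / N) :=
  isBoundedUnder_of ⟨1, ratio_le A⟩

lemma ratio_cobdd (A : Set ℕ) : IsCoboundedUnder (· ≤ ·) atTop
    (fun N : ℕ => (Nat.card ↥(A ∩ Set.Icc 1 N) : ℝ) / N) :=
  IsBoundedUnder.isCoboundedUnder_le (isBoundedUnder_of ⟨0, fun N => by positivity⟩)

lemma upperDensity_le_one (A : Set ℕ) : upperDensity A ≤ 1 :=
  limsup_le_of_le (ratio_cobdd A) (Eventually.of_forall (ratio_le A))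

lemma freq_of_lt {A : Set ℕ} {a : ℝ} (h : a < upperDensity A) (M : ℕ) :
    ∃ n ≥ M, 1 ≤ n ∧ a * n < (Nat.card ↥(A ∩ Set.Icc 1 n) : ℝ) := by
  have h1 := frequently_lt_of_lt_limsup (ratio_cobdd A) h
  obtain ⟨n, hn, h2⟩ := (frequently_atTop.1 h1) (max M 1)
  have hn1 : 1 ≤ n := le_trans (le_max_right _ _) hn
  refine ⟨n, le_trans (le_max_left _ _) hn, hn1, ?_⟩
  have : (0:ℝ) < n := by exact_mod_cast hn1
  exact (lt_div_iff₀ this).1 h2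

lemma cnt_shift (A : Set ℕ) (m n : ℕ) :
    (Nat.card ↥(A ∩ Set.Icc 1 n) : ℝ) ≤ m + (Nat.card ↥({k | k + m ∈ A} ∩ Set.Icc 1 n) : ℝ) := by
  have hsub : A ∩ Set.Icc 1 n ⊆
      Set.Icc 1 m ∪ (fun k => k + m) '' ({k | k + m ∈ A} ∩ Set.Icc 1 n) := by
    rintro k ⟨hk, h1, h2⟩
    by_cases h : k ≤ m
    · exact Or.inl ⟨h1, h⟩
    · right
      refine ⟨k - m, ⟨?_, ?_, ?_⟩, ?_⟩
      · have : k - m + m = k := by omega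
        simpa [this] using hk
      · omega
      · omega
      · show k - m + m = k
        omega
  have hf : ({k | k + m ∈ A} ∩ Set.Icc 1 n).Finite := (Set.finite_Icc 1 n).inter_of_right _
  have h1 := Set.ncard_le_ncard hsub ((Set.finite_Icc 1 m).union (hf.image _))
  have h2 := Set.ncard_union_le (Set.Icc 1 m)
    ((fun k => k + m) '' ({k | k + m ∈ A} ∩ Set.Icc 1 n))
  have h3 := Set.ncard_image_le (f := fun k => k + m) hf
  have h4 : (Set.Icc 1 m).ncard = m := by
    rw [← Finset.coe_Icc, Set.ncard_coe_finset]; simp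
  rw [Nat.card_coe_set_eq, Nat.card_coe_set_eq]
  exact_mod_cast (by omega)

lemma cnt_mono {A B : Set ℕ} {n : ℕ} (h : A ∩ Set.Icc 1 n ⊆ B) :
    (Nat.card ↥(A ∩ Set.Icc 1 n) : ℝ) ≤ Nat.card ↥(B ∩ Set.Icc 1 n) := by
  rw [Nat.card_coe_set_eq, Nat.card_coe_set_eq]
  have hs : A ∩ Set.Icc 1 n ⊆ B ∩ Set.Icc 1 n := fun k hk => ⟨h hk, hk.2⟩
  exact_mod_cast Set.ncard_le_ncard hs ((Set.finite_Icc 1 n).inter_of_right _)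

lemma hyp_iter {X : Type*} [NormedAddCommGroup X] [NormedSpace ℝ X] (T : X →L[ℝ] X) {x : X}
    (hx : HypPt (⇑T) x) (m : ℕ) : HypPt (⇑T) ((⇑T)^[m] x) := by
  unfold HypPt at *
  rcases subsingleton_or_nontrivial X with hs | hs
  · intro y
    exact subset_closure ⟨0, Subsingleton.elim _ _⟩
  · haveI : ∀ y : X, (𝓝[≠] y).NeBot := fun y => Module.punctured_nhds_neBot ℝ X y
    have := hx.diff_finite ((Set.finite_Iio m).image (fun n : ℕ => (⇑T)^[n] x))
    refine this.mono ?_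
    rintro _ ⟨⟨n, rfl⟩, h2⟩
    by_cases h : n < m
    · exact absurd ⟨n, h, rfl⟩ h2
    · refine ⟨n - m, ?_⟩
      show (⇑T)^[n - m] ((⇑T)^[m] x) = (⇑T)^[n] x
      rw [← Function.iterate_add_apply]
      congr 2
      omega

lemma iter_smul {X : Type*} [NormedAddCommGroup X] [NormedSpace ℝ X] (T : X →L[ℝ] X) (a : ℝ)
    (x : X) (n : ℕ) : (⇑T)^[n] (a • x) = a • (⇑T)^[n] x := by
  induction n with
  | zero => rfl
  | succ n ih => rw [Function.iterate_succ_apply', Function.iterate_succ_apply', ih, map_smul]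

lemma hyp_smul {X : Type*} [NormedAddCommGroup X] [NormedSpace ℝ X] (T : X →L[ℝ] X) {x : X}
    (hx : HypPt (⇑T) x) {a : ℝ} (ha : a ≠ 0) : HypPt (⇑T) (a • x) := by
  have h : DenseRange (fun y : X => a • y) :=
    Function.Surjective.denseRange (fun y => ⟨a⁻¹ • y, by simp [smul_smul, ha]⟩)
  have h2 := h.comp (f := fun n : ℕ => (⇑T)^[n] x) hx (continuous_const_smul a)
  have h3 : (fun n : ℕ => (⇑T)^[n] (a • x)) = (fun y : X => a • y) ∘ fun n : ℕ => (⇑T)^[n] x := by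
    funext n
    exact iter_smul T a x n
  unfold HypPt
  rw [h3]
  exact h2

lemma hyp_residual {X : Type*} [NormedAddCommGroup X] [NormedSpace ℝ X]
    [TopologicalSpace.SeparableSpace X] (T : X →L[ℝ] X) {x : X}
    (hx : HypPt (⇑T) x) : {y : X | HypPt (⇑T) y} ∈ residual X := by
  haveI := UniformSpace.secondCountable_of_separable X
  have hB := TopologicalSpace.isBasis_countableBasis X
  have key : (⋂ U ∈ TopologicalSpace.countableBasis X, ⋃ n : ℕ, (⇑T)^[n] ⁻¹' U) ∈ residual X := by
    refine (countable_bInter_mem (TopologicalSpace.countable_countableBasis X)).2 ?_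
    intro U hU
    refine residual_of_dense_open ?_ ?_
    · exact isOpen_iUnion fun n => (hB.isOpen hU).preimage (T.continuous.iterate n)
    · refine Dense.mono ?_ hx
      rintro _ ⟨m, rfl⟩
      obtain ⟨_, hz, n, rfl⟩ := (hyp_iter T hx m).inter_open_nonempty U (hB.isOpen hU)
        (TopologicalSpace.nonempty_of_mem_countableBasis hU)
      exact mem_iUnion.2 ⟨n, hz⟩
  refine mem_of_superset key ?_
  intro y hy
  refine hB.dense_iff.2 ?_
  intro U hU _
  obtain ⟨n, hn⟩ := mem_iUnion.1 (mem_iInter₂.1 hy U hU)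
  exact ⟨_, hn, n, rfl⟩

/-- Let `X` be a separable Banach space and `T` a hypercyclic bounded
linear operator on `X`. For every `α > 0`, the set of hypercyclic vectors `x` such that
the upper density of `N_T(x, B̄(0,α))` equals `c(T)` is comeager in `X`. -/
theorem stmt6 {X : Type*} [NormedAddCommGroup X] [NormedSpace ℝ X] [CompleteSpace X]
    [TopologicalSpace.SeparableSpace X] [MeasurableSpace X] [BorelSpace X]
    (T : X →L[ℝ] X) (hhc : ∃ x : X, HypPt (⇑T) x) (α : ℝ) (hα : 0 < α) :
    {x : X | HypPt (⇑T) x ∧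
      upperDensity {n : ℕ | (⇑T)^[n] x ∈ Metric.closedBall 0 α} = cConst (⇑T)} ∈
      residual X := by
  obtain ⟨x₀, hx₀⟩ := hhc
  set c := cConst (⇑T) with hc
  let O : ℕ → Set X := fun j => {x | ∃ n ≥ j, 1 ≤ n ∧ (c - 1 / ((j:ℝ) + 1)) * n <
    (Nat.card ↥({k : ℕ | (⇑T)^[k] x ∈ Metric.ball 0 α} ∩ Set.Icc 1 n) : ℝ)}
  have hO : ∀ j, O j ∈ residual X := by
    intro j
    have hε : (0:ℝ) < 1 / ((j:ℝ) + 1) := by positivity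
    set ε : ℝ := 1 / ((j:ℝ) + 1) with hεd
    refine residual_of_dense_open ?_ ?_
    · rw [isOpen_iff_mem_nhds]
      rintro x ⟨n, hn, hn1, hlt⟩
      have hfin : ({k : ℕ | (⇑T)^[k] x ∈ Metric.ball 0 α} ∩ Set.Icc 1 n).Finite :=
        (Set.finite_Icc 1 n).inter_of_right _
      have : ∀ᶠ x' in 𝓝 x, ∀ k ∈ ({k : ℕ | (⇑T)^[k] x ∈ Metric.ball 0 α} ∩ Set.Icc 1 n),
          (⇑T)^[k] x' ∈ Metric.ball 0 α := by
        refine (eventually_all_finite hfin).2 ?_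
        intro k hk
        exact (T.continuous.iterate k).continuousAt.eventually_mem (isOpen_ball.mem_nhds hk.1)
      filter_upwards [this] with x' hx'
      exact ⟨n, hn, hn1, hlt.trans_le (cnt_mono hx')⟩
    · have hlt : c - ε / 2 < sSup {c : ℝ | ∃ R : ℝ, 0 < R ∧ ∃ x : X, HypPt (⇑T) x ∧
          c = upperDensity {n : ℕ | (⇑T)^[n] x ∈ Metric.closedBall 0 R}} := by
        have : c - ε / 2 < c := by linarith
        exact this
      obtain ⟨_, ⟨R, hR, x, hx, rfl⟩, hd⟩ :=
        exists_lt_of_lt_csSup (by exact ⟨_, 1, one_pos, x₀, hx₀, rfl⟩) hlt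
      have ha : 0 < α / (2 * R) := by positivity
      refine Dense.mono ?_ (hyp_smul T hx ha.ne')
      rintro _ ⟨m, rfl⟩
      obtain ⟨n, hn, hn1, h⟩ := freq_of_lt hd (max j ⌈2 * m / ε⌉₊)
      refine ⟨n, le_trans (le_max_left _ _) hn, hn1, ?_⟩
      have hm : 2 * m / ε ≤ n :=
        (Nat.le_ceil _).trans (by exact_mod_cast (le_max_right _ _).trans hn)
      rw [div_le_iff₀ hε] at hm
      have hs := cnt_shift {n : ℕ | (⇑T)^[n] x ∈ Metric.closedBall 0 R} m n
      have hmn : (Nat.card ↥({k | k + m ∈ {n : ℕ | (⇑T)^[n] x ∈ Metric.closedBall 0 R}} ∩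
          Set.Icc 1 n) : ℝ) ≤ (Nat.card ↥({k : ℕ | (⇑T)^[k]
          ((fun n : ℕ => (⇑T)^[n] ((α / (2 * R)) • x)) m) ∈ Metric.ball 0 α} ∩
          Set.Icc 1 n) : ℝ) := by
        apply cnt_mono
        rintro k ⟨hk, -⟩
        have hk' : ‖(⇑T)^[k + m] x‖ ≤ R := by simpa using hk
        show (⇑T)^[k] ((⇑T)^[m] ((α / (2 * R)) • x)) ∈ Metric.ball 0 α
        rw [← Function.iterate_add_apply, iter_smul, mem_ball_zero_iff, norm_smul,
          Real.norm_of_nonneg ha.le]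
        calc α / (2 * R) * ‖(⇑T)^[k + m] x‖ ≤ α / (2 * R) * R := by gcongr
          _ = α / 2 := by field_simp
          _ < α := by linarith
      nlinarith
  have hall := (countable_iInter_mem (l := residual X) (s := O)).2 hO
  filter_upwards [hall, hyp_residual T hx₀] with x hxO hxH
  refine ⟨hxH, le_antisymm ?_ ?_⟩
  · refine le_csSup ⟨1, ?_⟩ ⟨α, hα, x, hxH, rfl⟩
    rintro _ ⟨R, -, y, -, rfl⟩
    exact upperDensity_le_one _
  · refine le_of_forall_pos_sub_le ?_
    intro ε hε
    refine le_limsup_of_frequently_le ?_ (ratio_bdd _)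
    refine frequently_atTop.2 ?_
    intro N
    obtain ⟨j, hj⟩ := exists_nat_one_div_lt hε
    obtain ⟨n, hn, hn1, h⟩ := mem_iInter.1 hxO (max N j)
    refine ⟨n, le_trans (le_max_left _ _) hn, ?_⟩
    have hn0 : (0:ℝ) < n := by exact_mod_cast hn1
    rw [le_div_iff₀ hn0]
    have h1 : 1 / (((max N j : ℕ):ℝ) + 1) ≤ 1 / ((j:ℝ) + 1) := by
      apply one_div_le_one_div_of_le (by positivity)
      have : (j:ℝ) ≤ ((max N j : ℕ):ℝ) := by exact_mod_cast le_max_right _ _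
      linarith
    have h2 := cnt_mono (A := {k : ℕ | (⇑T)^[k] x ∈ Metric.ball 0 α})
      (B := {k : ℕ | (⇑T)^[k] x ∈ Metric.closedBall 0 α}) (n := n)
      (fun k hk => ball_subset_closedBall hk.1)
    have h3 : (c - ε) * n ≤ (c - 1 / (((max N j : ℕ):ℝ) + 1)) * n := by
      apply mul_le_mul_of_nonneg_right _ hn0.le
      linarith
    linarith
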